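/- arXiv:1403.1682 — 2 statements merged into one kernel-verified Lean document; each statement's English description precedes it below -/
import Mathlib

section
/- Suppose that in degree k the spaces H^k_∂̄, H^k_A, A^k, B^k, C^k are finite-dimensional. Then dim H^k_A + dim B^k = dim H^k_∂̄ + dim A^k + dim C^k. -/
open Submodule LinearMap Module

section Setup

variable (U : ℤ → Type*) [∀ k, AddCommGroup (U k)] [∀ k, Module ℂ (U k)]

/-- The identification `U a → U b` induced by an equality `a = b` of degrees. -/
def castU {a b : ℤ} (h : a = b) : U a →ₗ[ℂ] U b := by subst h; exact LinearMap.id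

variable (D : ∀ k : ℤ, U k →ₗ[ℂ] U (k + 1)) (Db : ∀ k : ℤ, U k →ₗ[ℂ] U (k - 1))

/-- The composite `∂∂̄ : U^k → U^{k-1} → U^k`. -/
def ddbar (k : ℤ) : U k →ₗ[ℂ] U k :=
  (castU U (show k - 1 + 1 = k by ring)).comp ((D (k - 1)).comp (Db k))

/-- `ker ∂ ∩ U^k` -/
def kerD (k : ℤ) : Submodule ℂ (U k) := LinearMap.ker (D k)

/-- `ker ∂̄ ∩ U^k` -/
def kerDb (k : ℤ) : Submodule ℂ (U k) := LinearMap.ker (Db k)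

/-- `∂(U^{k-1})` -/
def imD (k : ℤ) : Submodule ℂ (U k) :=
  LinearMap.range ((castU U (show k - 1 + 1 = k by ring)).comp (D (k - 1)))

/-- `∂̄(U^{k+1})` -/
def imDb (k : ℤ) : Submodule ℂ (U k) :=
  LinearMap.range ((castU U (show k + 1 - 1 = k by ring)).comp (Db (k + 1)))

/-- `ker (∂∂̄) ∩ U^k` -/
def kerDDbar (k : ℤ) : Submodule ℂ (U k) := LinearMap.ker (ddbar U D Db k)

/-- `(∂∂̄)(U^k)` -/
def imDDbar (k : ℤ) : Submodule ℂ (U k) := LinearMap.range (ddbar U D Db k)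

end Setup

/-- The quotient of a submodule `p` by (the preimage in `p` of) a submodule `q`. -/
abbrev SubQuot {V : Type*} [AddCommGroup V] [Module ℂ V] (p q : Submodule ℂ V) :=
  ↥p ⧸ q.comap p.subtype

/-- The map `p/q → p'/q'` induced by the identity (inclusion) on representatives. -/
def qmap {V : Type*} [AddCommGroup V] [Module ℂ V] {p p' q q' : Submodule ℂ V}
    (hp : p ≤ p') (hq : q ≤ q') : SubQuot p q →ₗ[ℂ] SubQuot p' q' :=
  Submodule.mapQ _ _ (Submodule.inclusion hp) fun x hx => by
    simp only [Submodule.mem_comap, Submodule.subtype_apply, Submodule.coe_inclusion] at hx ⊢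
    exact hq hx

section Cohomology

variable (U : ℤ → Type*) [∀ k, AddCommGroup (U k)] [∀ k, Module ℂ (U k)]
variable (D : ∀ k : ℤ, U k →ₗ[ℂ] U (k + 1)) (Db : ∀ k : ℤ, U k →ₗ[ℂ] U (k - 1))

/-- `H^k_∂ = (ker ∂ ∩ U^k)/∂(U^{k-1})` -/
abbrev Hd (k : ℤ) := SubQuot (kerD U D k) (imD U D k)

/-- `H^k_∂̄ = (ker ∂̄ ∩ U^k)/∂̄(U^{k+1})` -/
abbrev Hdb (k : ℤ) := SubQuot (kerDb U Db k) (imDb U Db k)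

/-- `H^k_BC = (ker ∂ ∩ ker ∂̄ ∩ U^k)/(∂∂̄)(U^k)` -/
abbrev HBC (k : ℤ) := SubQuot (kerD U D k ⊓ kerDb U Db k) (imDDbar U D Db k)

/-- `H^k_A = (ker (∂∂̄) ∩ U^k)/(∂(U^{k-1}) + ∂̄(U^{k+1}))` -/
abbrev HA (k : ℤ) := SubQuot (kerDDbar U D Db k) (imD U D k ⊔ imDb U Db k)

/-- `A^k = (∂(U^{k-1}) ∩ ∂̄(U^{k+1}))/(∂∂̄)(U^k)` -/
abbrev Avar (k : ℤ) := SubQuot (imD U D k ⊓ imDb U Db k) (imDDbar U D Db k)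

/-- `B^k = (ker ∂̄ ∩ ∂(U^{k-1}))/(∂∂̄)(U^k)` -/
abbrev Bvar (k : ℤ) := SubQuot (kerDb U Db k ⊓ imD U D k) (imDDbar U D Db k)

/-- `C^k = (ker (∂∂̄) ∩ U^k)/((ker ∂̄ ∩ U^k) + ∂(U^{k-1}))` -/
abbrev Cvar (k : ℤ) := SubQuot (kerDDbar U D Db k) (kerDb U Db k ⊔ imD U D k)

/-- `D^k = (ker ∂ ∩ ∂̄(U^{k+1}))/(∂∂̄)(U^k)` -/
abbrev Dvar (k : ℤ) := SubQuot (kerD U D k ⊓ imDb U Db k) (imDDbar U D Db k)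

/-- `E^k = (ker (∂∂̄) ∩ U^k)/((ker ∂ ∩ U^k) + ∂̄(U^{k+1}))` -/
abbrev Evar (k : ℤ) := SubQuot (kerDDbar U D Db k) (kerD U D k ⊔ imDb U Db k)

/-- `F^k = (ker (∂∂̄) ∩ U^k)/((ker ∂ ∩ U^k) + (ker ∂̄ ∩ U^k))` -/
abbrev Fvar (k : ℤ) := SubQuot (kerDDbar U D Db k) (kerD U D k ⊔ kerDb U Db k)

end Cohomology

/-!
In degree `k` write `K = ker ∂̄`, `I = im ∂`, `J = im ∂̄`, `W = im ∂∂̄` and `Z = ker ∂∂̄`. Then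
`W ≤ I ⊓ J`, `J ≤ K ≤ Z` and `I ≤ Z`, and the identity holds for any such subspaces. Indeed,
`K/J` splits into its trace `(K ⊓ I)/(J ⊓ I)` on `I` and its image `(K ⊔ I)/(J ⊔ I)` modulo `I`.
The trace is `B/A`, where `B = (K ⊓ I)/W` and `A = (I ⊓ J)/W`, and the image is the kernel of the
projection from `H_A = Z/(I ⊔ J)` onto `C = Z/(K ⊔ I)`. Additivity of the rank along chains of
subspaces then gives the identity, first between cardinals.
-/

section RelativeRank

universe u v

variable {R : Type v} [Ring R] {M : Type u} [AddCommGroup M] [Module R M]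

theorem rank_inf_quotient_eq_rank_sup_quotient (p q : Submodule R M) :
    Module.rank R (p ⧸ (p ⊓ q).submoduleOf p) =
      Module.rank R ((p ⊔ q : Submodule R M) ⧸ q.submoduleOf (p ⊔ q)) :=
  (LinearMap.quotientInfEquivSupQuotient p q).rank_eq

variable [HasRankNullity.{u} R]

theorem rank_quotient_eq_add_of_le {p q r : Submodule R M} (hrq : r ≤ q) (hqp : q ≤ p) :
    Module.rank R (p ⧸ r.submoduleOf p) =
      Module.rank R (p ⧸ q.submoduleOf p) + Module.rank R (q ⧸ r.submoduleOf q) := by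
  let π : (p ⧸ r.submoduleOf p) →ₗ[R] p ⧸ q.submoduleOf p := factor (comap_mono hrq)
  let ι : q →ₗ[R] p ⧸ r.submoduleOf p := (r.submoduleOf p).mkQ ∘ₗ inclusion hqp
  have ker_ι : ker ι = r.submoduleOf q := by
    rw [ker_comp, ker_mkQ]
    rfl
  have range_ι : range ι = ker π := by
    rw [range_comp, range_inclusion]
    exact (ker_mapQ (r.submoduleOf p) (q.submoduleOf p) LinearMap.id _).symm
  rw [π.rank_eq_of_surjective (factor_surjective _), ← range_ι, ← ker_ι,
    ι.quotKerEquivRange.rank_eq]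

theorem rank_quotient_eq_sup_add_inf {p q : Submodule R M} (hqp : q ≤ p) (s : Submodule R M) :
    Module.rank R (p ⧸ q.submoduleOf p) =
      Module.rank R ((p ⊔ s : Submodule R M) ⧸ (q ⊔ s).submoduleOf (p ⊔ s)) +
        Module.rank R ((p ⊓ s : Submodule R M) ⧸ (q ⊓ s).submoduleOf (p ⊓ s)) := by
  have modular : p ⊓ (q ⊔ s) = p ⊓ s ⊔ q := by rw [inf_sup_assoc_of_le s hqp, sup_comm]
  have sup_part := rank_inf_quotient_eq_rank_sup_quotient p (q ⊔ s)
  have inf_part := rank_inf_quotient_eq_rank_sup_quotient (p ⊓ s) q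
  rw [modular, ← sup_assoc, sup_eq_left.2 hqp] at sup_part
  rw [inf_right_comm, inf_eq_right.2 hqp] at inf_part
  rw [← sup_part, inf_part]
  exact rank_quotient_eq_add_of_le le_sup_right (sup_le inf_le_left hqp)

theorem rank_quotient_sup_add_rank_inf_quotient {K I J Z W : Submodule R M}
    (hWI : W ≤ I) (hWJ : W ≤ J) (hJK : J ≤ K) (hKZ : K ≤ Z) (hIZ : I ≤ Z) :
    Module.rank R (Z ⧸ (I ⊔ J).submoduleOf Z) +
        Module.rank R ((K ⊓ I : Submodule R M) ⧸ W.submoduleOf (K ⊓ I)) =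
      Module.rank R (K ⧸ J.submoduleOf K) +
        Module.rank R ((I ⊓ J : Submodule R M) ⧸ W.submoduleOf (I ⊓ J)) +
        Module.rank R (Z ⧸ (K ⊔ I).submoduleOf Z) := by
  rw [sup_comm I J, inf_comm I J,
    rank_quotient_eq_add_of_le (sup_le_sup_right hJK I) (sup_le hKZ hIZ),
    rank_quotient_eq_add_of_le (le_inf hWJ hWI) (inf_le_inf_right I hJK),
    rank_quotient_eq_sup_add_inf hJK I]
  ring

end RelativeRank

section DoubleComplex

variable {U : ℤ → Type*} [∀ k, AddCommGroup (U k)] [∀ k, Module ℂ (U k)]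

theorem apply_castU {σ : ℤ → ℤ} (f : ∀ k, U k →ₗ[ℂ] U (σ k)) {a b : ℤ} (h : a = b) (x : U a) :
    f b (castU U h x) = castU U (congrArg σ h) (f a x) := by
  subst h
  rfl

variable {D : ∀ k : ℤ, U k →ₗ[ℂ] U (k + 1)} {Db : ∀ k : ℤ, U k →ₗ[ℂ] U (k - 1)}

theorem imDDbar_le_imD (k : ℤ) : imDDbar U D Db k ≤ imD U D k :=
  range_comp_le_range (Db k) ((castU U _).comp (D (k - 1)))

theorem kerDb_le_kerDDbar (k : ℤ) : kerDb U Db k ≤ kerDDbar U D Db k :=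
  ker_le_ker_comp (Db k) ((castU U _).comp (D (k - 1)))

theorem imDb_le_kerDb (hDb2 : ∀ k : ℤ, (Db (k - 1)).comp (Db k) = 0) (k : ℤ) :
    imDb U Db k ≤ kerDb U Db k := by
  rintro _ ⟨x, rfl⟩
  calc Db k (castU U _ (Db (k + 1) x))
      = castU U _ (Db (k + 1 - 1) (Db (k + 1) x)) := apply_castU Db _ _
    _ = castU U _ 0 := congrArg _ (LinearMap.congr_fun (hDb2 (k + 1)) x)
    _ = 0 := map_zero _

theorem imD_le_kerD (hD2 : ∀ k : ℤ, (D (k + 1)).comp (D k) = 0) (k : ℤ) :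
    imD U D k ≤ kerD U D k := by
  rintro _ ⟨x, rfl⟩
  calc D k (castU U _ (D (k - 1) x))
      = castU U _ (D (k - 1 + 1) (D (k - 1) x)) := apply_castU D _ _
    _ = castU U _ 0 := congrArg _ (LinearMap.congr_fun (hD2 (k - 1)) x)
    _ = 0 := map_zero _

section Anticommuting

variable (hanti : ∀ k : ℤ, ddbar U D Db k
  + (castU U (show k + 1 - 1 = k by ring)).comp ((Db (k + 1)).comp (D k)) = 0)

include hanti

theorem ddbar_eq_comp_neg (k : ℤ) :
    ddbar U D Db k = ((castU U (show k + 1 - 1 = k by ring)).comp (Db (k + 1))).comp (-D k) := by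
  rw [comp_neg]
  exact eq_neg_of_add_eq_zero_left (hanti k)

theorem imDDbar_le_imDb (k : ℤ) : imDDbar U D Db k ≤ imDb U Db k := by
  rw [imDDbar, ddbar_eq_comp_neg hanti]
  exact range_comp_le_range _ _

theorem kerD_le_kerDDbar (k : ℤ) : kerD U D k ≤ kerDDbar U D Db k := by
  rw [kerDDbar, ddbar_eq_comp_neg hanti, kerD, ← ker_neg]
  exact ker_le_ker_comp _ _

end Anticommuting

end DoubleComplex

theorem varouchas_dim_identity_one_general
    {U : ℤ → Type*} [∀ k, AddCommGroup (U k)] [∀ k, Module ℂ (U k)]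
    {D : ∀ k : ℤ, U k →ₗ[ℂ] U (k + 1)} {Db : ∀ k : ℤ, U k →ₗ[ℂ] U (k - 1)}
    (hD2 : ∀ k : ℤ, (D (k + 1)).comp (D k) = 0)
    (hDb2 : ∀ k : ℤ, (Db (k - 1)).comp (Db k) = 0)
    (hanti : ∀ k : ℤ, ddbar U D Db k
      + (castU U (show k + 1 - 1 = k by ring)).comp ((Db (k + 1)).comp (D k)) = 0)
    (k : ℤ) :
    Module.rank ℂ (HA U D Db k) + Module.rank ℂ (Bvar U D Db k)
      = Module.rank ℂ (Hdb U Db k) + Module.rank ℂ (Avar U D Db k)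
        + Module.rank ℂ (Cvar U D Db k) :=
  rank_quotient_sup_add_rank_inf_quotient (imDDbar_le_imD k) (imDDbar_le_imDb hanti k)
    (imDb_le_kerDb hDb2 k) (kerDb_le_kerDDbar k)
    ((imD_le_kerD hD2 k).trans (kerD_le_kerDDbar hanti k))

/-- the Varouchas dimension identity
`dim H^k_A + dim B^k = dim H^k_∂̄ + dim A^k + dim C^k`. -/
theorem varouchas_dim_identity_one
    (n : ℕ) (U : ℤ → Type*) [∀ k, AddCommGroup (U k)] [∀ k, Module ℂ (U k)]
    (hvan : ∀ k : ℤ, (n : ℤ) < |k| → ∀ x : U k, x = 0)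
    (D : ∀ k : ℤ, U k →ₗ[ℂ] U (k + 1)) (Db : ∀ k : ℤ, U k →ₗ[ℂ] U (k - 1))
    (hD2 : ∀ k : ℤ, (D (k + 1)).comp (D k) = 0)
    (hDb2 : ∀ k : ℤ, (Db (k - 1)).comp (Db k) = 0)
    (hanti : ∀ k : ℤ, ddbar U D Db k
      + (castU U (show k + 1 - 1 = k by ring)).comp ((Db (k + 1)).comp (D k)) = 0)
    (k : ℤ)
    (h1 : FiniteDimensional ℂ (Hdb U Db k))
    (h2 : FiniteDimensional ℂ (HA U D Db k))
    (h3 : FiniteDimensional ℂ (Avar U D Db k))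
    (h4 : FiniteDimensional ℂ (Bvar U D Db k))
    (h5 : FiniteDimensional ℂ (Cvar U D Db k)) :
    finrank ℂ (HA U D Db k) + finrank ℂ (Bvar U D Db k)
      = finrank ℂ (Hdb U Db k) + finrank ℂ (Avar U D Db k) + finrank ℂ (Cvar U D Db k) := by
  have h := varouchas_dim_identity_one_general hD2 hDb2 hanti k
  simp only [← finrank_eq_rank] at h
  exact_mod_cast h
end

section
/- Suppose that for all p, q ≥ 0 the spaces H^{p,q}_BC, H^{p,q}_∂ and H^{p,q}_∂̄ are finite-dimensional with dim H^{p,q}_BC = dim H^{p,q}_∂ = dim H^{p,q}_∂̄. If for some r, s ≥ 0 the map φ^{r,s}_- : H^{r,s}_BC → H^{r,s}_∂̄ is not an isomorphism, then φ^{r+1,s+1}_- : H^{r+1,s+1}_BC → H^{r+1,s+1}_∂̄ is not an isomorphism. -/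
open Submodule LinearMap Module

section Setup

variable (A : ℤ → ℤ → Type*) [∀ p q, AddCommGroup (A p q)] [∀ p q, Module ℂ (A p q)]

/-- The identification `A p q → A p' q'` induced by equalities of the bidegrees. -/
def castA {p q p' q' : ℤ} (h : p = p') (h' : q = q') : A p q →ₗ[ℂ] A p' q' := by
  subst h; subst h'; exact LinearMap.id

variable (d : ∀ p q : ℤ, A p q →ₗ[ℂ] A (p + 1) q) (db : ∀ p q : ℤ, A p q →ₗ[ℂ] A p (q + 1))

/-- The composite `∂∂̄ : A^{p,q} → A^{p+1,q} → A^{p+1,q+1}`. -/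
def ddb (p q : ℤ) : A p q →ₗ[ℂ] A (p + 1) (q + 1) := (db (p + 1) q).comp (d p q)

/-- `ker ∂ ∩ A^{p,q}` -/
def kerd (p q : ℤ) : Submodule ℂ (A p q) := LinearMap.ker (d p q)

/-- `ker ∂̄ ∩ A^{p,q}` -/
def kerdb (p q : ℤ) : Submodule ℂ (A p q) := LinearMap.ker (db p q)

/-- `∂(A^{p-1,q})` -/
def imd (p q : ℤ) : Submodule ℂ (A p q) :=
  LinearMap.range ((castA A (show p - 1 + 1 = p by ring) rfl).comp (d (p - 1) q))

/-- `∂̄(A^{p,q-1})` -/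
def imdb (p q : ℤ) : Submodule ℂ (A p q) :=
  LinearMap.range ((castA A rfl (show q - 1 + 1 = q by ring)).comp (db p (q - 1)))

/-- `(∂∂̄)(A^{p-1,q-1})` -/
def imddb (p q : ℤ) : Submodule ℂ (A p q) :=
  LinearMap.range
    ((castA A (show p - 1 + 1 = p by ring) (show q - 1 + 1 = q by ring)).comp
      (ddb A d db (p - 1) (q - 1)))

end Setup

section Cohomology

variable (A : ℤ → ℤ → Type*) [∀ p q, AddCommGroup (A p q)] [∀ p q, Module ℂ (A p q)]
variable (d : ∀ p q : ℤ, A p q →ₗ[ℂ] A (p + 1) q) (db : ∀ p q : ℤ, A p q →ₗ[ℂ] A p (q + 1))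

/-- `H^{p,q}_∂ = (ker ∂ ∩ A^{p,q})/∂(A^{p-1,q})` -/
abbrev Hpqd (p q : ℤ) := SubQuot (kerd A d p q) (imd A d p q)

/-- `H^{p,q}_∂̄ = (ker ∂̄ ∩ A^{p,q})/∂̄(A^{p,q-1})` -/
abbrev Hpqdb (p q : ℤ) := SubQuot (kerdb A db p q) (imdb A db p q)

/-- `H^{p,q}_BC = (ker ∂ ∩ ker ∂̄ ∩ A^{p,q})/(∂∂̄)(A^{p-1,q-1})` -/
abbrev HpqBC (p q : ℤ) := SubQuot (kerd A d p q ⊓ kerdb A db p q) (imddb A d db p q)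

end Cohomology

section Lemmas

variable (A : ℤ → ℤ → Type*) [∀ p q, AddCommGroup (A p q)] [∀ p q, Module ℂ (A p q)]
variable (d : ∀ p q : ℤ, A p q →ₗ[ℂ] A (p + 1) q) (db : ∀ p q : ℤ, A p q →ₗ[ℂ] A p (q + 1))

lemma castA_castA {p q p' q' p'' q'' : ℤ} (h1 : p = p') (h2 : q = q') (h3 : p' = p'')
    (h4 : q' = q'') (x : A p q) :
    castA A h3 h4 (castA A h1 h2 x) = castA A (h1.trans h3) (h2.trans h4) x := by
  subst h1; subst h2; subst h3; subst h4; rfl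

lemma d_castA {p q p' q' : ℤ} (h : p = p') (h' : q = q') (x : A p q) :
    d p' q' (castA A h h' x) = castA A (show p + 1 = p' + 1 by rw [h]) h' (d p q x) := by
  subst h; subst h'; rfl

lemma db_castA {p q p' q' : ℤ} (h : p = p') (h' : q = q') (x : A p q) :
    db p' q' (castA A h h' x) = castA A h (show q + 1 = q' + 1 by rw [h']) (db p q x) := by
  subst h; subst h'; rfl

lemma imddb_le_imdb (p q : ℤ) : imddb A d db p q ≤ imdb A db p q := by
  rintro x ⟨y, rfl⟩
  refine ⟨castA A (show p - 1 + 1 = p by ring) rfl (d (p - 1) (q - 1) y), ?_⟩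
  simp only [LinearMap.comp_apply, ddb, db_castA, castA_castA]

lemma imddb_le_imd
    (hanti : ∀ p q : ℤ, (db (p + 1) q).comp (d p q) + (d p (q + 1)).comp (db p q) = 0)
    (p q : ℤ) : imddb A d db p q ≤ imd A d p q := by
  rintro x ⟨y, rfl⟩
  refine ⟨-(castA A rfl (show q - 1 + 1 = q by ring) (db (p - 1) (q - 1) y)), ?_⟩
  have h := DFunLike.congr_fun (hanti (p - 1) (q - 1)) y
  simp only [LinearMap.add_apply, LinearMap.comp_apply, LinearMap.zero_apply] at h
  simp only [LinearMap.comp_apply, map_neg, d_castA, castA_castA, ddb]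
  rw [eq_neg_of_add_eq_zero_left h, map_neg]

end Lemmas

section Phi

variable (A : ℤ → ℤ → Type*) [∀ p q, AddCommGroup (A p q)] [∀ p q, Module ℂ (A p q)]
variable (d : ∀ p q : ℤ, A p q →ₗ[ℂ] A (p + 1) q) (db : ∀ p q : ℤ, A p q →ₗ[ℂ] A p (q + 1))
variable (hanti : ∀ p q : ℤ, (db (p + 1) q).comp (d p q) + (d p (q + 1)).comp (db p q) = 0)

/-- `φ^{p,q}_+ : H^{p,q}_BC → H^{p,q}_∂`, induced by the identity on representatives. -/
def phiPlus (p q : ℤ) : HpqBC A d db p q →ₗ[ℂ] Hpqd A d p q :=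
  qmap inf_le_left (imddb_le_imd A d db hanti p q)

/-- `φ^{p,q}_- : H^{p,q}_BC → H^{p,q}_∂̄`, induced by the identity on representatives. -/
def phiMinus (p q : ℤ) : HpqBC A d db p q →ₗ[ℂ] Hpqdb A db p q :=
  qmap inf_le_right (imddb_le_imdb A d db p q)

end Phi

/-!
For a double complex, injectivity of `φ₋^{p+1,q+1}` forces surjectivity of `φ₊^{p+1,q}`: if
`∂x = 0`, then `∂̄x` represents a Bott–Chern class killed by `φ₋`, so `∂̄x = ∂̄∂y` for some `y`, and
`x - ∂y` is a `∂`- and `∂̄`-closed representative of the class of `x`. Exchanging `∂` and `∂̄`,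
injectivity of `φ₊^{p+1,q}` forces surjectivity of `φ₋^{p,q}`. Equality of dimensions turns
surjectivity of `φ₊^{p+1,q}` back into injectivity, which links the two implications, and
surjectivity of `φ₋^{p,q}` into bijectivity.
-/

section SubQuot

variable {V : Type*} [AddCommGroup V] [Module ℂ V] {p p' q q' : Submodule ℂ V}

lemma qmap_injective_iff (hp : p ≤ p') (hq : q ≤ q') :
    Function.Injective (qmap hp hq) ↔ p ⊓ q' ≤ q := by
  rw [← LinearMap.ker_eq_bot, qmap, Submodule.ker_mapQ, ← LinearMap.le_ker_iff_map,
    Submodule.ker_mkQ, ← Submodule.comap_comp, Submodule.subtype_comp_inclusion,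
    ← Submodule.map_le_iff_le_comap, Submodule.map_comap_subtype]

lemma qmap_surjective_iff (hp : p ≤ p') (hq : q ≤ q') :
    Function.Surjective (qmap hp hq) ↔ p' ≤ p ⊔ q' := by
  rw [← LinearMap.range_eq_top, qmap, Submodule.range_mapQ, Submodule.range_inclusion,
    Submodule.map_mkQ_eq_top, ← top_le_iff,
    ← Submodule.map_le_map_iff_of_injective p'.subtype_injective, Submodule.map_sup,
    Submodule.map_subtype_top, Submodule.map_comap_subtype, Submodule.map_comap_subtype,
    inf_eq_right.2 hp, sup_comm, inf_comm, ← sup_inf_assoc_of_le q' hp, le_inf_iff,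
    and_iff_left le_rfl]

end SubQuot

section DoubleComplex

variable {A : ℤ → ℤ → Type*} [∀ p q, AddCommGroup (A p q)] [∀ p q, Module ℂ (A p q)]
variable {d : ∀ p q : ℤ, A p q →ₗ[ℂ] A (p + 1) q} {db : ∀ p q : ℤ, A p q →ₗ[ℂ] A p (q + 1)}

lemma imd_add_one (p q : ℤ) : imd A d (p + 1) q = LinearMap.range (d p q) := by
  suffices ∀ (p' : ℤ) (h : p' + 1 = p + 1),
      LinearMap.range ((castA A h rfl).comp (d p' q)) = LinearMap.range (d p q) from this _ _
  intro p' h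
  obtain rfl := add_right_cancel h
  rfl

lemma imdb_add_one (p q : ℤ) : imdb A db p (q + 1) = LinearMap.range (db p q) := by
  suffices ∀ (q' : ℤ) (h : q' + 1 = q + 1),
      LinearMap.range ((castA A rfl h).comp (db p q')) = LinearMap.range (db p q) from this _ _
  intro q' h
  obtain rfl := add_right_cancel h
  rfl

lemma imddb_add_one (p q : ℤ) :
    imddb A d db (p + 1) (q + 1) = LinearMap.range (ddb A d db p q) := by
  suffices ∀ (p' q' : ℤ) (hp : p' + 1 = p + 1) (hq : q' + 1 = q + 1),
      LinearMap.range ((castA A hp hq).comp (ddb A d db p' q')) =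
        LinearMap.range (ddb A d db p q) from this _ _ _ _
  intro p' q' hp hq
  obtain rfl := add_right_cancel hp
  obtain rfl := add_right_cancel hq
  rfl

lemma d_mem_kerd (hd2 : ∀ p q : ℤ, (d (p + 1) q).comp (d p q) = 0) {p q : ℤ} (x : A p q) :
    d p q x ∈ kerd A d (p + 1) q :=
  LinearMap.congr_fun (hd2 p q) x

lemma db_mem_kerdb (hdb2 : ∀ p q : ℤ, (db p (q + 1)).comp (db p q) = 0) {p q : ℤ} (x : A p q) :
    db p q x ∈ kerdb A db p (q + 1) :=
  LinearMap.congr_fun (hdb2 p q) x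

section Anticommute

variable (hanti : ∀ p q : ℤ, (db (p + 1) q).comp (d p q) + (d p (q + 1)).comp (db p q) = 0)

include hanti

lemma d_db_eq_neg_db_d {p q : ℤ} (x : A p q) : d p (q + 1) (db p q x) = -db (p + 1) q (d p q x) :=
  eq_neg_of_add_eq_zero_right (LinearMap.congr_fun (hanti p q) x)

lemma db_mem_kerd {p q : ℤ} {x : A p q} (hx : x ∈ kerd A d p q) :
    db p q x ∈ kerd A d p (q + 1) := by
  rw [kerd, LinearMap.mem_ker] at hx ⊢
  rw [d_db_eq_neg_db_d hanti, hx, map_zero, neg_zero]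

lemma d_mem_kerdb {p q : ℤ} {x : A p q} (hx : x ∈ kerdb A db p q) :
    d p q x ∈ kerdb A db (p + 1) q := by
  rw [kerdb, LinearMap.mem_ker] at hx ⊢
  rw [← neg_eq_zero, ← d_db_eq_neg_db_d hanti, hx, map_zero]

end Anticommute

theorem phiPlus_surjective_of_phiMinus_injective
    (hd2 : ∀ p q : ℤ, (d (p + 1) q).comp (d p q) = 0)
    (hdb2 : ∀ p q : ℤ, (db p (q + 1)).comp (db p q) = 0)
    (hanti : ∀ p q : ℤ, (db (p + 1) q).comp (d p q) + (d p (q + 1)).comp (db p q) = 0)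
    {p q : ℤ} (hinj : Function.Injective (phiMinus A d db (p + 1) (q + 1))) :
    Function.Surjective (phiPlus A d db hanti (p + 1) q) := by
  rw [phiMinus, qmap_injective_iff, imddb_add_one, imdb_add_one] at hinj
  rw [phiPlus, qmap_surjective_iff, imd_add_one]
  intro x hx
  obtain ⟨y, hy⟩ : ∃ y, db (p + 1) q (d p q y) = db (p + 1) q x :=
    hinj ⟨⟨db_mem_kerd hanti hx, db_mem_kerdb hdb2 x⟩, x, rfl⟩
  have hd : x - d p q y ∈ kerd A d (p + 1) q := sub_mem hx (d_mem_kerd hd2 y)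
  have hdb : x - d p q y ∈ kerdb A db (p + 1) q := by
    rw [kerdb, LinearMap.mem_ker, map_sub, hy, sub_self]
  exact Submodule.mem_sup.2 ⟨x - d p q y, ⟨hd, hdb⟩, d p q y, ⟨y, rfl⟩, sub_add_cancel _ _⟩

theorem phiMinus_surjective_of_phiPlus_injective
    (hd2 : ∀ p q : ℤ, (d (p + 1) q).comp (d p q) = 0)
    (hdb2 : ∀ p q : ℤ, (db p (q + 1)).comp (db p q) = 0)
    (hanti : ∀ p q : ℤ, (db (p + 1) q).comp (d p q) + (d p (q + 1)).comp (db p q) = 0)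
    {p q : ℤ} (hinj : Function.Injective (phiPlus A d db hanti (p + 1) q)) :
    Function.Surjective (phiMinus A d db p q) := by
  obtain ⟨q, rfl⟩ : ∃ q', q = q' + 1 := ⟨q - 1, (sub_add_cancel q 1).symm⟩
  rw [phiPlus, qmap_injective_iff, imddb_add_one, imd_add_one] at hinj
  rw [phiMinus, qmap_surjective_iff, imdb_add_one]
  intro x hx
  obtain ⟨y, hy⟩ : ∃ y, db (p + 1) q (d p q y) = d p (q + 1) x :=
    hinj ⟨⟨d_mem_kerd hd2 x, d_mem_kerdb hanti hx⟩, x, rfl⟩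
  have hd : x + db p q y ∈ kerd A d p (q + 1) := by
    rw [kerd, LinearMap.mem_ker, map_add, d_db_eq_neg_db_d hanti, hy, add_neg_cancel]
  have hdb : x + db p q y ∈ kerdb A db p (q + 1) := add_mem hx (db_mem_kerdb hdb2 y)
  exact Submodule.mem_sup.2
    ⟨x + db p q y, ⟨hd, hdb⟩, -db p q y, neg_mem ⟨y, rfl⟩, add_neg_cancel_right _ _⟩

theorem phiMinus_not_iso_propagates_general
    (hd2 : ∀ p q : ℤ, (d (p + 1) q).comp (d p q) = 0)
    (hdb2 : ∀ p q : ℤ, (db p (q + 1)).comp (db p q) = 0)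
    (hanti : ∀ p q : ℤ, (db (p + 1) q).comp (d p q) + (d p (q + 1)).comp (db p q) = 0)
    {r s : ℤ}
    [FiniteDimensional ℂ (HpqBC A d db (r + 1) s)] [FiniteDimensional ℂ (Hpqd A d (r + 1) s)]
    [FiniteDimensional ℂ (HpqBC A d db r s)] [FiniteDimensional ℂ (Hpqdb A db r s)]
    (hdimd : finrank ℂ (HpqBC A d db (r + 1) s) = finrank ℂ (Hpqd A d (r + 1) s))
    (hdimdb : finrank ℂ (HpqBC A d db r s) = finrank ℂ (Hpqdb A db r s))
    (hniso : ¬ Function.Bijective (phiMinus A d db r s)) :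
    ¬ Function.Injective (phiMinus A d db (r + 1) (s + 1)) := by
  intro hinj
  have hplus : Function.Injective (phiPlus A d db hanti (r + 1) s) :=
    (LinearMap.injective_iff_surjective_of_finrank_eq_finrank hdimd).2
      (phiPlus_surjective_of_phiMinus_injective hd2 hdb2 hanti hinj)
  have hsurj : Function.Surjective (phiMinus A d db r s) :=
    phiMinus_surjective_of_phiPlus_injective hd2 hdb2 hanti hplus
  exact hniso
    ⟨(LinearMap.injective_iff_surjective_of_finrank_eq_finrank hdimdb).2 hsurj, hsurj⟩

end DoubleComplex

/-- under the dimension assumptions, if `φ^{r,s}_-` is not an isomorphism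
then neither is `φ^{r+1,s+1}_-`. -/
theorem phiMinus_not_iso_propagates
    (A : ℤ → ℤ → Type*) [∀ p q, AddCommGroup (A p q)] [∀ p q, Module ℂ (A p q)]
    (hA0 : ∀ p q : ℤ, p < 0 ∨ q < 0 → ∀ x : A p q, x = 0)
    (d : ∀ p q : ℤ, A p q →ₗ[ℂ] A (p + 1) q) (db : ∀ p q : ℤ, A p q →ₗ[ℂ] A p (q + 1))
    (hd2 : ∀ p q : ℤ, (d (p + 1) q).comp (d p q) = 0)
    (hdb2 : ∀ p q : ℤ, (db p (q + 1)).comp (db p q) = 0)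
    (hanti : ∀ p q : ℤ, (db (p + 1) q).comp (d p q) + (d p (q + 1)).comp (db p q) = 0)
    (hfinBC : ∀ p q : ℤ, 0 ≤ p → 0 ≤ q → FiniteDimensional ℂ (HpqBC A d db p q))
    (hfind : ∀ p q : ℤ, 0 ≤ p → 0 ≤ q → FiniteDimensional ℂ (Hpqd A d p q))
    (hfindb : ∀ p q : ℤ, 0 ≤ p → 0 ≤ q → FiniteDimensional ℂ (Hpqdb A db p q))
    (hdim : ∀ p q : ℤ, 0 ≤ p → 0 ≤ q →
      finrank ℂ (HpqBC A d db p q) = finrank ℂ (Hpqd A d p q) ∧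
      finrank ℂ (HpqBC A d db p q) = finrank ℂ (Hpqdb A db p q))
    (r s : ℤ) (hr : 0 ≤ r) (hs : 0 ≤ s)
    (hniso : ¬ Function.Bijective ⇑(phiMinus A d db r s)) :
    ¬ Function.Bijective ⇑(phiMinus A d db (r + 1) (s + 1)) := by
  have hr' : 0 ≤ r + 1 := by lia
  have := hfinBC (r + 1) s hr' hs
  have := hfind (r + 1) s hr' hs
  have := hfinBC r s hr hs
  have := hfindb r s hr hs
  exact mt Function.Bijective.injective <| phiMinus_not_iso_propagates_general hd2 hdb2 hanti
    (hdim (r + 1) s hr' hs).1 (hdim r s hr hs).2 hniso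
end
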